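/- Let F be a 1-expanding CNF formula over V in which every variable occurs, and suppose there is no nonempty set U ⊆ V admitting an autarky on U such that F ∖ F_U is 1-expanding. Let S ⊆ V be a nonempty set with |F_S| = |S| + 1 such that F[S] is unsatisfiable (no assignment of the variables of S satisfies all restricted clauses F i ∩ (literals over S) for i ∈ F_S). Let c' be the clause consisting of all literals (v, b) occurring in some clause F i with i ∈ F_S and v ∉ S, and let F' be obtained from F by deleting all indices in F_S and adding one new index carrying c' (c' may be empty; an empty clause is satisfied by no assignment). Then sat(F) = sat(F') + |S|. -/

import Mathlib

/-!
Write `F_S` for the clauses meeting `S`; clauses outside `F_S` do not see the variables of `S`,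
so it suffices to compare, for a fixed assignment outside `S`, the number of satisfied clauses of
`F_S` with `|S|`, plus one if `c'` is satisfied.

For `≤`: at most `|S| + 1` clauses of `F_S` are satisfied, and if all of them are, then, `F[S]`
being unsatisfiable, one is satisfied by a literal outside `S`, which belongs to `c'`.

For `≥`: by 1-expansion, Hall's condition still holds after deleting any one clause `i₀`, so the
variables can be matched to distinct clauses other than `i₀` (`exists_matching_avoiding`). Resetting
the variables of `S` along this matching satisfies `|S|` clauses of `F_S` other than `i₀`. If `c'` is
satisfied by a literal of a clause of `F_S`, that clause is taken as `i₀`; it remains satisfied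
because the literal is outside `S`.
-/

open scoped Classical

/-- A truth assignment `τ` satisfies a clause `c` (a finite set of literals `(v, b)`)
if some literal `(v, b) ∈ c` has `τ v = b`. -/
def Satisfies {V : Type*} (τ : V → Bool) (c : Finset (V × Bool)) : Prop :=
  ∃ l ∈ c, τ l.1 = l.2

/-- `satCount F τ` is the number of indices whose clause is satisfied by `τ`. -/
noncomputable def satCount {V I : Type*} [Fintype I]
    (F : I → Finset (V × Bool)) (τ : V → Bool) : ℕ :=
  (Finset.univ.filter fun i => Satisfies τ (F i)).card

/-- `satMax F` is the maximum of `satCount F τ` over all assignments `τ`. -/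
noncomputable def satMax {V I : Type*} [Fintype V] [Fintype I]
    (F : I → Finset (V × Bool)) : ℕ :=
  Finset.univ.sup fun τ : V → Bool => satCount F τ

/-- `M` is a matching of the formula `F`: each pair `(v, i) ∈ M` has variable `v`
occurring in clause `F i`, and the pairs have pairwise distinct variables and
pairwise distinct indices. -/
def IsMatching {V I : Type*} (F : I → Finset (V × Bool)) (M : Finset (V × I)) : Prop :=
  (∀ p ∈ M, ∃ b, (p.1, b) ∈ F p.2) ∧
  ∀ p ∈ M, ∀ q ∈ M, p ≠ q → p.1 ≠ q.1 ∧ p.2 ≠ q.2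

/-- The matching number `ν(F)`: the largest size of a matching of `F`. -/
noncomputable def matchNum {V I : Type*} [Fintype V] [Fintype I]
    (F : I → Finset (V × Bool)) : ℕ :=
  (Finset.univ.filter fun M : Finset (V × I) => IsMatching F M).sup Finset.card

/-- Hall's theorem for a 1-expanding formula: the matching can avoid any prescribed clause. -/
lemma exists_matching_avoiding {V I : Type*} [Fintype V] [Fintype I] (F : I → Finset (V × Bool))
    (hexp : ∀ X : Finset V, X.Nonempty →
      X.card + 1 ≤ (Finset.univ.filter fun i : I => ∃ l ∈ F i, l.1 ∈ X).card) (i₀ : I) :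
    ∃ f : V → I, Function.Injective f ∧ ∀ v, f v ≠ i₀ ∧ ∃ b, (v, b) ∈ F (f v) := by
  have h := (Finset.all_card_le_biUnion_card_iff_exists_injective
    (fun v : V => Finset.univ.filter fun i : I => i ≠ i₀ ∧ ∃ b, (v, b) ∈ F i)).1 ?_
  · obtain ⟨f, hf, h⟩ := h
    exact ⟨f, hf, fun v => by simpa using h v⟩
  · intro X
    rcases X.eq_empty_or_nonempty with rfl | hX
    · simp
    · have h1 := hexp X hX
      have h2 := Finset.pred_card_le_card_erase
        (s := Finset.univ.filter fun i : I => ∃ l ∈ F i, l.1 ∈ X) (a := i₀)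
      refine le_trans (by omega) (Finset.card_le_card (s :=
        (Finset.univ.filter fun i : I => ∃ l ∈ F i, l.1 ∈ X).erase i₀) ?_)
      intro i hi
      simp only [Finset.mem_erase, Finset.mem_filter, Finset.mem_univ, true_and,
        Finset.mem_biUnion] at hi ⊢
      obtain ⟨hi0, l, hl, hlX⟩ := hi
      exact ⟨l.1, hlX, hi0, l.2, hl⟩

lemma satCount_split {V I : Type*} [Fintype I] (F : I → Finset (V × Bool)) (T : I → Prop)
    (τ : V → Bool) :
    satCount F τ = (Finset.univ.filter fun i => ¬ T i ∧ Satisfies τ (F i)).card +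
      (Finset.univ.filter fun i => T i ∧ Satisfies τ (F i)).card := by
  unfold satCount
  rw [← Finset.card_filter_add_card_filter_not (s := Finset.univ.filter fun i =>
    Satisfies τ (F i)) (p := fun i => ¬ T i)]
  simp only [Finset.filter_filter, not_not, and_comm]

lemma satCount_replace {V I : Type*} [Fintype I] (F : I → Finset (V × Bool)) (T : I → Prop)
    [Fintype {i : I // ¬ T i}] (G : {i : I // ¬ T i} ⊕ Unit → Finset (V × Bool)) (c : Finset (V × Bool))
    (hl : ∀ i, G (Sum.inl i) = F i.1) (hr : ∀ u, G (Sum.inr u) = c) (τ : V → Bool) :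
    satCount G τ = (Finset.univ.filter fun i => ¬ T i ∧ Satisfies τ (F i)).card +
      (if Satisfies τ c then 1 else 0) := by
  have h1 : (Finset.univ.filter fun i : {i : I // ¬ T i} => Satisfies τ (F i.1)).card
      = (Finset.univ.filter fun i => ¬ T i ∧ Satisfies τ (F i)).card := by
    rw [← Finset.card_map (Function.Embedding.subtype _)]
    congr 1
    ext i
    simp [and_comm]
  unfold satCount
  rw [← h1, Finset.card_filter, Fintype.sum_sum_type, Finset.card_filter]
  simp [hl, hr]

/-- Reduction Rule 4, unsatisfiable case: `F` is 1-expanding with every variable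
occurring, no nonempty set `U` admits an autarky with `F ∖ F_U` 1-expanding, `S` is a
nonempty set of variables with `|F_S| = |S| + 1` and `F[S]` unsatisfiable. If `c'`
consists of all literals over variables outside `S` occurring in clauses of `F_S`, and
`F'` is obtained from `F` by deleting the clauses of `F_S` and adding `c'`, then
`sat(F) = sat(F') + |S|`. -/
theorem stmt8 {V I : Type*} [Fintype V] [Fintype I] (F : I → Finset (V × Bool))
    (hne : ∀ i, (F i).Nonempty)
    (hone : ∀ i v b b', (v, b) ∈ F i → (v, b') ∈ F i → b = b')
    (hocc : ∀ v : V, ∃ i : I, ∃ b, (v, b) ∈ F i)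
    (hexp : ∀ X : Finset V, X.Nonempty →
      X.card + 1 ≤ (Finset.univ.filter fun i : I => ∃ l ∈ F i, l.1 ∈ X).card)
    (hnoaut : ¬ ∃ (U : Finset V) (π : V → Bool), U.Nonempty ∧
      (∀ i : I, (∃ l ∈ F i, l.1 ∈ U) → ∃ l ∈ F i, l.1 ∈ U ∧ π l.1 = l.2) ∧
      ∀ X : Finset V, X.Nonempty →
        (∀ x ∈ X, ∃ i : I, (¬ ∃ l ∈ F i, l.1 ∈ U) ∧ ∃ b, (x, b) ∈ F i) →
        X.card + 1 ≤ (Finset.univ.filter fun i : I =>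
          (¬ ∃ l ∈ F i, l.1 ∈ U) ∧ ∃ l ∈ F i, l.1 ∈ X).card)
    (S : Finset V) (hS : S.Nonempty)
    (hcard : (Finset.univ.filter fun i : I => ∃ l ∈ F i, l.1 ∈ S).card = S.card + 1)
    (hunsat : ¬ ∃ σ : V → Bool,
      ∀ i : I, (∃ l ∈ F i, l.1 ∈ S) → ∃ l ∈ F i, l.1 ∈ S ∧ σ l.1 = l.2)
    (c' : Finset (V × Bool))
    (hc' : c' = Finset.univ.filter fun l : V × Bool =>
      l.1 ∉ S ∧ ∃ i : I, (∃ l' ∈ F i, l'.1 ∈ S) ∧ l ∈ F i) :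
    satMax F =
      satMax (fun j : {i : I // ¬ ∃ l ∈ F i, l.1 ∈ S} ⊕ Unit =>
        match j with
        | Sum.inl i => F i.1
        | Sum.inr _ => c') + S.card := by
  let T : I → Prop := fun i => ∃ l ∈ F i, l.1 ∈ S
  let G : {i : I // ¬ ∃ l ∈ F i, l.1 ∈ S} ⊕ Unit → Finset (V × Bool) := fun j =>
    match j with
    | Sum.inl i => F i.1
    | Sum.inr _ => c'
  have hG : ∀ τ, satCount G τ =
      (Finset.univ.filter fun i => ¬ T i ∧ Satisfies τ (F i)).card +
        (if Satisfies τ c' then 1 else 0) := by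
    intro τ
    convert satCount_replace F T G c' (fun _ => rfl) (fun _ => rfl) τ
  have hF : ∀ τ, satCount F τ =
      (Finset.univ.filter fun i => ¬ T i ∧ Satisfies τ (F i)).card +
        (Finset.univ.filter fun i => T i ∧ Satisfies τ (F i)).card := by
    intro τ
    convert satCount_split F T τ
  change satMax F = satMax G + S.card
  apply le_antisymm
  · refine Finset.sup_le fun τ _ => ?_
    refine le_trans ?_ (Nat.add_le_add_right (Finset.le_sup (Finset.mem_univ τ)) _)
    rw [hG, hF]
    have hsub : (Finset.univ.filter fun i => T i ∧ Satisfies τ (F i)) ⊆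
        Finset.univ.filter fun i : I => ∃ l ∈ F i, l.1 ∈ S := by
      intro i hi
      simp only [Finset.mem_filter, Finset.mem_univ, true_and] at hi ⊢
      exact hi.1
    have hle := Finset.card_le_card hsub
    by_cases hsat : Satisfies τ c'
    · rw [if_pos hsat]
      omega
    · rw [if_neg hsat]
      have hlt : (Finset.univ.filter fun i => T i ∧ Satisfies τ (F i)).card < S.card + 1 := by
        rw [← hcard]
        refine Finset.card_lt_card (hsub.ssubset_of_ne fun heq => hunsat ⟨τ, fun i hi => ?_⟩)
        have hi' : i ∈ Finset.univ.filter fun i => T i ∧ Satisfies τ (F i) := by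
          rw [heq]
          simpa using hi
        obtain ⟨_, l, hl, hτ⟩ := (Finset.mem_filter.1 hi').2
        by_cases hlS : l.1 ∈ S
        · exact ⟨l, hl, hlS, hτ⟩
        · exact absurd ⟨l, by rw [hc']; simpa using ⟨hlS, i, by simpa using hi, hl⟩, hτ⟩ hsat
      omega
  · obtain ⟨τ, -, hτ⟩ := Finset.exists_mem_eq_sup (Finset.univ : Finset (V → Bool))
      Finset.univ_nonempty (satCount G)
    have hmax : ∀ σ, satCount F σ ≤ satMax F := fun σ =>
      Finset.le_sup (f := fun τ => satCount F τ) (Finset.mem_univ σ)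
    -- The deleted clause `i₀` contains a true literal outside `S` whenever `c'` is satisfied.
    obtain ⟨i₀, hi₀T, hi₀⟩ : ∃ i₀, T i₀ ∧
        (Satisfies τ c' → ∃ l ∈ F i₀, l.1 ∉ S ∧ τ l.1 = l.2) := by
      by_cases hsat : Satisfies τ c'
      · obtain ⟨l, hl, hlτ⟩ := hsat
        rw [hc', Finset.mem_filter] at hl
        obtain ⟨-, hlS, i, hi, hli⟩ := hl
        exact ⟨i, hi, fun _ => ⟨l, hli, hlS, hlτ⟩⟩
      · obtain ⟨v, hv⟩ := hS
        obtain ⟨i, b, hb⟩ := hocc v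
        exact ⟨i, ⟨(v, b), hb, hv⟩, fun h => absurd h hsat⟩
    obtain ⟨f, hf, hfm⟩ := exists_matching_avoiding F hexp i₀
    choose hf0 β hβ using hfm
    let σ : V → Bool := fun v => if v ∈ S then β v else τ v
    have hout : (Finset.univ.filter fun i => ¬ T i ∧ Satisfies τ (F i)) ⊆
        Finset.univ.filter fun i => ¬ T i ∧ Satisfies σ (F i) := by
      intro i hi
      simp only [Finset.mem_filter, Finset.mem_univ, true_and] at hi ⊢
      obtain ⟨hiT, l, hl, hlτ⟩ := hi
      have hlS : l.1 ∉ S := fun h => hiT ⟨l, hl, h⟩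
      exact ⟨hiT, l, hl, by simpa [σ, hlS] using hlτ⟩
    have himg : S.image f ⊆ Finset.univ.filter fun i => T i ∧ Satisfies σ (F i) := by
      intro i hi
      obtain ⟨v, hv, rfl⟩ := Finset.mem_image.1 hi
      simp only [Finset.mem_filter, Finset.mem_univ, true_and]
      exact ⟨⟨_, hβ v, hv⟩, _, hβ v, by simp [σ, hv]⟩
    have hin : S.card + (if Satisfies τ c' then 1 else 0) ≤
        (Finset.univ.filter fun i => T i ∧ Satisfies σ (F i)).card := by
      have hcf := Finset.card_image_of_injective S hf
      by_cases hsat : Satisfies τ c'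
      · rw [if_pos hsat, ← hcf, ← Finset.card_insert_of_notMem (a := i₀)]
        · refine Finset.card_le_card (Finset.insert_subset ?_ himg)
          obtain ⟨l, hl, hlS, hlτ⟩ := hi₀ hsat
          simp only [Finset.mem_filter, Finset.mem_univ, true_and]
          exact ⟨hi₀T, l, hl, by simpa [σ, hlS] using hlτ⟩
        · intro h
          obtain ⟨v, -, hv⟩ := Finset.mem_image.1 h
          exact hf0 v hv
      · rw [if_neg hsat, ← hcf]
        exact Finset.card_le_card himg
    have h1 := hmax σ
    rw [hF] at h1
    have h2 := Finset.card_le_card hout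
    unfold satMax at h1 ⊢
    rw [hτ, hG]
    omega
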